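/- Let N ≥ 3, α ∈ (0, N−2), and 1 ≤ p < (N−α)/2. Then there is a constant C > 0 such that for every u ∈ D^{1,p}(G): ∑_{x∈G} (R_α ∗ |u|^p)(x)·|u(x)|^p ≤ C·( ∑_{x∈G} ∑_{y∼x} |u(y)−u(x)|^p )². -/

import Mathlib

open Filter Topology

noncomputable section

namespace Choquard

variable {G : Type*}

/-- The word metric on the Cayley graph of `(G, S)`: the least `k` such that
`y = x * s₁ * ⋯ * s_k` with each `sᵢ ∈ S`. -/
def wordDist [Group G] (S : Finset G) (x y : G) : ℕ :=
  sInf {k : ℕ | ∃ l : List G, (∀ s ∈ l, s ∈ S) ∧ l.length = k ∧ y = x * l.prod}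

/-- Convolution against a kernel: `(R ∗ f)(x) = ∑_{y ∈ G} R(x,y) f(y)`. -/
def conv (R : G → G → ℝ) (f : G → ℝ) (x : G) : ℝ := ∑' y, R x y * f y

/-- The `ℓ^q(G)` norm of `u`. -/
def lpNorm (q : ℝ) (u : G → ℝ) : ℝ := (∑' x, |u x| ^ q) ^ (1 / q)

/-- `u ∈ ℓ^q(G)`. -/
def Memlp (q : ℝ) (u : G → ℝ) : Prop := Summable fun x : G => |u x| ^ q

/-- `|∇u(x)|_p^p = ∑_{y ∼ x} |u(y) − u(x)|^p`, where `y ∼ x` iff `y = x * s`, `s ∈ S`. -/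
def gradP [Group G] (S : Finset G) (p : ℝ) (u : G → ℝ) (x : G) : ℝ :=
  ∑ s ∈ S, |u (x * s) - u x| ^ p

/-- The `D^{1,p}` norm `(∑_x ∑_{y ∼ x} |u(y) − u(x)|^p)^{1/p}`. -/
def D1Norm [Group G] (S : Finset G) (p : ℝ) (u : G → ℝ) : ℝ :=
  (∑' x, gradP S p u x) ^ (1 / p)

/-- `u ∈ D^{1,p}(G) = {u ∈ ℓ^{Np/(N−p)}(G) : ‖u‖_{D^{1,p}} < ∞}`. -/
def MemD1p [Group G] (S : Finset G) (N : ℕ) (p : ℝ) (u : G → ℝ) : Prop :=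
  Memlp ((N : ℝ) * p / ((N : ℝ) - p)) u ∧ Summable (gradP S p u)

/-- `|∇u(x)|₂² = ∑_{y ∼ x} (u(y) − u(x))²`. -/
def gradSq [Group G] (S : Finset G) (u : G → ℝ) (x : G) : ℝ :=
  ∑ s ∈ S, (u (x * s) - u x) ^ 2

/-- The `D^{1,2}` norm. -/
def D12Norm [Group G] (S : Finset G) (u : G → ℝ) : ℝ :=
  (∑' x, gradSq S u x) ^ ((1 : ℝ) / 2)

/-- `u ∈ D^{1,2}(G) = {u ∈ ℓ^{2N/(N−2)}(G) : ‖u‖_{D^{1,2}} < ∞}`. -/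
def MemD12 [Group G] (S : Finset G) (N : ℕ) (u : G → ℝ) : Prop :=
  Memlp (2 * (N : ℝ) / ((N : ℝ) - 2)) u ∧ Summable (gradSq S u)

/-- The graph Laplacian `Δu(x) = ∑_{y ∼ x} (u(y) − u(x))`. -/
def lap [Group G] (S : Finset G) (u : G → ℝ) (x : G) : ℝ :=
  ∑ s ∈ S, (u (x * s) - u x)

/-- `u ∈ D^{2,2}(G) = {u ∈ ℓ^{2N/(N−4)}(G) : ‖Δu‖_{ℓ²} < ∞}`. -/
def MemD22 [Group G] (S : Finset G) (N : ℕ) (u : G → ℝ) : Prop :=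
  Memlp (2 * (N : ℝ) / ((N : ℝ) - 4)) u ∧ Summable fun x => (lap S u x) ^ 2

/-- `u ∈ D^{2,p}(G) = {u ∈ ℓ^{Np/(N−2p)}(G) : ‖Δu‖_{ℓ^p} < ∞}`. -/
def MemD2p [Group G] (S : Finset G) (N : ℕ) (p : ℝ) (u : G → ℝ) : Prop :=
  Memlp ((N : ℝ) * p / ((N : ℝ) - 2 * p)) u ∧ Summable fun x => |lap S u x| ^ p

/-- The nonlocal energy `∑_{x ∈ G} (R_α ∗ |u|^p)(x) |u(x)|^p`. -/
def energy (R : G → G → ℝ) (p : ℝ) (u : G → ℝ) : ℝ :=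
  ∑' x, conv R (fun y => |u y| ^ p) x * |u x| ^ p

/-- The optimal constant `K` of the Sobolev-type inequality. -/
def bestK [Group G] (S : Finset G) (N : ℕ) (R : G → G → ℝ) (p : ℝ) : ℝ :=
  sSup {t : ℝ | ∃ u : G → ℝ, MemD12 S N u ∧ D12Norm S u = 1 ∧ t = energy R p u}

/-- The discrete `p`-Laplacian. -/
def pLap [Group G] (S : Finset G) (p : ℝ) (u : G → ℝ) (x : G) : ℝ :=
  ∑ s ∈ S, |u (x * s) - u x| ^ (p - 2) * (u (x * s) - u x)

/-- The cutoff `Ψ_r`, the indicator of `{x : d(x,e) ≥ r + 1}`. -/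
def cutoff [Group G] (S : Finset G) (r : ℕ) (x : G) : ℝ :=
  if r + 1 ≤ wordDist S 1 x then 1 else 0

/-!
Let `E = ∑ |∇u|^p`. The averages of `u` over balls of radius `2 ^ k - 1` start at `u` and tend
to `0`, so `u` is the telescoping sum of their consecutive differences. Since translating by an
element of length `n` costs `n ^ p * E` in `ℓ^p`, the `k`-th difference is `O(2 ^ k)` in `ℓ^p`
norm, and the volume growth improves this to `O(2 ^ (k * (1 - D / p)))` in `ℓ^∞` norm (both times
`E ^ (1 / p)`). Interpolating, the `ℓ^q` norms of the differences form a convergent geometric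
series as soon as `1 + D / q < D / p`: a Sobolev inequality short of the critical exponent.

For `1 / 2 < t < 1`, Hölder's inequality on pairs `(x, y)` with weights `2 * t - 1`, `1 - t`,
`1 - t` applied to `f x * f y`, `f x * k (x⁻¹ * y)`, `f y * k (x⁻¹ * y)` bounds the energy of
`f = |u| ^ (p / t)` for a kernel `R ≤ k ^ (2 - 2 * t)` with `k` summable. The condition
`p < (D - α) / 2` is exactly what allows a `t` for which both estimates have room to spare, so the
critical Sobolev and Hardy–Littlewood–Sobolev inequalities are never needed.
-/

open scoped BigOperators

section FiniteSums

variable {ι : Type*}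

theorem abs_expect_rpow_le (s : Finset ι) (f : ι → ℝ) {p : ℝ} (hp : 1 ≤ p) :
    |𝔼 i ∈ s, f i| ^ p ≤ 𝔼 i ∈ s, |f i| ^ p := by
  have hp0 : 0 < p := by linarith
  rcases s.eq_empty_or_nonempty with rfl | hs
  · simp [Real.zero_rpow hp0.ne']
  have hnonneg : 0 ≤ 𝔼 i ∈ s, |f i| ^ p := Finset.expect_nonneg fun i _ ↦ by positivity
  have hmean : |𝔼 i ∈ s, f i| ≤ (𝔼 i ∈ s, |f i| ^ p) ^ p⁻¹ := by
    have h := Real.compact_inner_le_weight_mul_Lp_of_nonneg s hp (w := 1) (f := fun i ↦ |f i|)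
      (fun _ ↦ zero_le_one) (fun i ↦ abs_nonneg (f i))
    simp only [Pi.one_apply, one_mul, Finset.expect_const hs, Real.one_rpow] at h
    exact (Finset.abs_expect_le s f).trans h
  calc |𝔼 i ∈ s, f i| ^ p ≤ ((𝔼 i ∈ s, |f i| ^ p) ^ p⁻¹) ^ p := by gcongr
    _ = 𝔼 i ∈ s, |f i| ^ p := Real.rpow_inv_rpow hnonneg hp0.ne'

theorem tendsto_expect_zero {κ : Type*} {l : Filter κ} {s : κ → Finset ι} {f : ι → ℝ}
    (hs : Tendsto (fun k ↦ (s k).card) l atTop) (hf : Tendsto f cofinite (𝓝 0)) :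
    Tendsto (fun k ↦ 𝔼 i ∈ s k, f i) l (𝓝 0) := by
  classical
  refine squeeze_zero_norm (fun k ↦ Finset.abs_expect_le (s k) f) ?_
  refine Metric.tendsto_nhds.2 fun ε hε ↦ ?_
  have hfinite : {i | ¬ |f i| < ε / 2}.Finite := by
    have h := Metric.tendsto_nhds.1 hf (ε / 2) (half_pos hε)
    simpa only [dist_zero_right, Real.norm_eq_abs] using eventually_cofinite.1 h
  set M : ℝ := ∑ i ∈ hfinite.toFinset, |f i|
  have hbound (k : κ) : ∑ i ∈ s k, |f i| ≤ M + (s k).card * (ε / 2) := by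
    rw [← Finset.sum_filter_add_sum_filter_not (s k) (fun i ↦ ¬ |f i| < ε / 2)]
    gcongr ?_ + ?_
    · refine Finset.sum_le_sum_of_subset_of_nonneg (fun i hi ↦ ?_) fun i _ _ ↦ abs_nonneg _
      simpa using (Finset.mem_filter.1 hi).2
    · refine (Finset.sum_le_card_nsmul _ _ (ε / 2) fun i hi ↦ ?_).trans ?_
      · exact (not_not.1 (Finset.mem_filter.1 hi).2).le
      · rw [nsmul_eq_mul]
        gcongr
        exact Finset.filter_subset _ _
  have hlarge : ∀ᶠ k in l, 2 * M / ε < (s k).card :=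
    (tendsto_natCast_atTop_atTop.comp hs).eventually_gt_atTop _
  filter_upwards [hlarge, hs.eventually_gt_atTop 0] with k hk hpos
  have hcard : (0 : ℝ) < (s k).card := mod_cast hpos
  rw [dist_zero_right, Real.norm_of_nonneg (Finset.expect_nonneg fun i _ ↦ abs_nonneg _),
    Finset.expect_eq_sum_div_card, div_lt_iff₀ hcard]
  rw [div_lt_iff₀ hε] at hk
  linarith [hbound k]

theorem sum_abs_rpow_le_of_forall_le {F : Finset ι} {v : ι → ℝ} {p q M : ℝ} (hp : 0 < p)
    (hpq : p ≤ q) (hM : ∀ i ∈ F, |v i| ^ p ≤ M) :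
    ∑ i ∈ F, |v i| ^ q ≤ M ^ ((q - p) / p) * ∑ i ∈ F, |v i| ^ p := by
  have : 0 ≤ (q - p) / p := div_nonneg (by linarith) hp.le
  rw [Finset.mul_sum]
  refine Finset.sum_le_sum fun i hi ↦ ?_
  calc |v i| ^ q = (|v i| ^ p) ^ ((q - p) / p) * |v i| ^ p := by
        rw [← Real.rpow_mul (abs_nonneg _), ← Real.rpow_add_of_nonneg (abs_nonneg _)
          (by positivity) hp.le]
        congr 1
        field_simp
        ring
    _ ≤ M ^ ((q - p) / p) * |v i| ^ p := by
        gcongr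
        exact hM i hi

theorem sum_abs_rpow_le_of_geometric (F : Finset ι) {U : ℕ → ι → ℝ} {q M r : ℝ} (hq : 1 ≤ q)
    (hM : 0 ≤ M) (hr₀ : 0 ≤ r) (hr₁ : r < 1)
    (hstep : ∀ k, ∑ i ∈ F, |U k i - U (k + 1) i| ^ q ≤ (M * r ^ k) ^ q)
    (hlim : ∀ i, Tendsto (fun k ↦ U k i) atTop (𝓝 0)) :
    ∑ i ∈ F, |U 0 i| ^ q ≤ (M / (1 - r)) ^ q := by
  have hq0 : 0 < q := by linarith
  have : Fact (1 ≤ ENNReal.ofReal q) := ⟨by simpa using hq⟩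
  have hqreal : (ENNReal.ofReal q).toReal = q := ENNReal.toReal_ofReal hq0.le
  let V (k : ℕ) : PiLp (ENNReal.ofReal q) fun _ : F ↦ ℝ := WithLp.toLp _ fun i ↦ U k i
  have hdist (f g : PiLp (ENNReal.ofReal q) fun _ : F ↦ ℝ) :
      dist f g = (∑ i, |f i - g i| ^ q) ^ (1 / q) := by
    rw [PiLp.dist_eq_sum (by rwa [hqreal]), hqreal]
    rfl
  have hV : Tendsto V atTop (𝓝 0) :=
    ((PiLp.continuous_toLp _ _).tendsto 0).comp (tendsto_pi_nhds.2 fun i ↦ hlim i)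
  have hVstep (k : ℕ) : dist (V k) (V (k + 1)) ≤ M * r ^ k := by
    rw [hdist, Finset.sum_coe_sort F fun i ↦ |U k i - U (k + 1) i| ^ q, one_div]
    exact (Real.rpow_inv_le_iff_of_pos (by positivity) (by positivity) hq0).2 (hstep k)
  have h := dist_le_of_le_geometric_of_tendsto₀ r M hr₁ hVstep hV
  rw [hdist] at h
  simp only [V, PiLp.zero_apply, sub_zero] at h
  rw [Finset.sum_coe_sort F fun i ↦ |U 0 i| ^ q] at h
  rw [one_div] at h
  have hr : 0 ≤ M / (1 - r) := div_nonneg hM (by linarith)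
  exact (Real.rpow_inv_le_iff_of_pos (by positivity) hr hq0).1 h

theorem sum_rpow_mul_rpow_mul_rpow_le (s : Finset ι) {a b c : ι → ℝ} (ha : ∀ i, 0 ≤ a i)
    (hb : ∀ i, 0 ≤ b i) (hc : ∀ i, 0 ≤ c i) {w₁ w₂ w₃ : ℝ} (hw₁ : 0 < w₁) (hw₂ : 0 < w₂)
    (hw₃ : 0 < w₃) (hw : w₁ + w₂ + w₃ = 1) :
    ∑ i ∈ s, a i ^ w₁ * b i ^ w₂ * c i ^ w₃ ≤
      (∑ i ∈ s, a i) ^ w₁ * (∑ i ∈ s, b i) ^ w₂ * (∑ i ∈ s, c i) ^ w₃ := by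
  have hA : 0 ≤ ∑ i ∈ s, a i := Finset.sum_nonneg fun i _ ↦ ha i
  have hB : 0 ≤ ∑ i ∈ s, b i := Finset.sum_nonneg fun i _ ↦ hb i
  have hC : 0 ≤ ∑ i ∈ s, c i := Finset.sum_nonneg fun i _ ↦ hc i
  by_cases hzero : ∑ i ∈ s, a i = 0 ∨ ∑ i ∈ s, b i = 0 ∨ ∑ i ∈ s, c i = 0
  · refine (Finset.sum_eq_zero fun i hi ↦ ?_).trans_le (by positivity)
    rcases hzero with h | h | h
    · simp [(Finset.sum_eq_zero_iff_of_nonneg fun i _ ↦ ha i).1 h i hi, hw₁.ne']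
    · simp [(Finset.sum_eq_zero_iff_of_nonneg fun i _ ↦ hb i).1 h i hi, hw₂.ne']
    · simp [(Finset.sum_eq_zero_iff_of_nonneg fun i _ ↦ hc i).1 h i hi, hw₃.ne']
  push Not at hzero
  obtain ⟨hA0, hB0, hC0⟩ := hzero
  set A := ∑ i ∈ s, a i
  set B := ∑ i ∈ s, b i
  set C := ∑ i ∈ s, c i
  have hpos : 0 < A ^ w₁ * B ^ w₂ * C ^ w₃ := by positivity
  have hamgm (i : ι) : a i ^ w₁ * b i ^ w₂ * c i ^ w₃ / (A ^ w₁ * B ^ w₂ * C ^ w₃) ≤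
      w₁ * (a i / A) + w₂ * (b i / B) + w₃ * (c i / C) := by
    have h := Real.geom_mean_le_arith_mean3_weighted hw₁.le hw₂.le hw₃.le
      (div_nonneg (ha i) hA) (div_nonneg (hb i) hB) (div_nonneg (hc i) hC) hw
    rwa [Real.div_rpow (ha i) hA, Real.div_rpow (hb i) hB, Real.div_rpow (hc i) hC,
      div_mul_div_comm, div_mul_div_comm] at h
  rw [← div_le_one hpos, Finset.sum_div]
  calc _ ≤ ∑ i ∈ s, (w₁ * (a i / A) + w₂ * (b i / B) + w₃ * (c i / C)) :=
        Finset.sum_le_sum fun i _ ↦ hamgm i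
    _ = w₁ * (A / A) + w₂ * (B / B) + w₃ * (C / C) := by
        simp only [Finset.sum_add_distrib, ← Finset.mul_sum, ← Finset.sum_div, A, B, C]
    _ = 1 := by rw [div_self hA0, div_self hB0, div_self hC0]; linarith

end FiniteSums

section Summability

variable {X Y : Type*}

theorem summable_rpow_neg_of_card_le {d : X → ℕ} {D C γ : ℝ} (hD : 0 ≤ D) (hγ : D < γ)
    (hcard : ∀ n (F : Finset X), (∀ x ∈ F, d x ≤ n) → (F.card : ℝ) ≤ C * ((n : ℝ) + 1) ^ D) :
    Summable fun x ↦ ((d x : ℝ) + 1) ^ (-γ) := by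
  classical
  set τ : ℝ := 2 ^ (D - γ)
  have hτ₁ : τ < 1 := Real.rpow_lt_one_of_one_lt_of_neg one_lt_two (by linarith)
  have hgeom : Summable fun k : ℕ ↦ C * 2 ^ D * τ ^ k :=
    (summable_geometric_of_lt_one (by positivity) hτ₁).mul_left _
  have hC : 0 ≤ C := by simpa using hcard 0 ∅
  let shell (x : X) : ℕ := Nat.log 2 (d x + 1)
  have hlower (x : X) : (2 : ℝ) ^ shell x ≤ d x + 1 := by
    exact_mod_cast Nat.pow_log_le_self 2 (Nat.succ_ne_zero (d x))
  have hupper (x : X) : d x ≤ 2 ^ (shell x + 1) - 1 :=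
    Nat.le_sub_one_of_lt <| (Nat.lt_succ_self _).trans (Nat.lt_pow_succ_log_self one_lt_two _)
  have hshell (F : Finset X) (k : ℕ) :
      ∑ x ∈ F with shell x = k, ((d x : ℝ) + 1) ^ (-γ) ≤ C * 2 ^ D * τ ^ k := by
    have hcount : ((F.filter (shell · = k)).card : ℝ) ≤ C * ((2 : ℝ) ^ (k + 1)) ^ D := by
      have h := hcard (2 ^ (k + 1) - 1) (F.filter (shell · = k)) fun x hx ↦ by
        simpa only [(Finset.mem_filter.1 hx).2] using hupper x
      rwa [Nat.cast_pred (by positivity), Nat.cast_pow, Nat.cast_ofNat, sub_add_cancel] at h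
    calc _ ≤ ∑ x ∈ F with shell x = k, ((2 : ℝ) ^ k) ^ (-γ) := by
          refine Finset.sum_le_sum fun x hx ↦ ?_
          refine Real.rpow_le_rpow_of_nonpos (by positivity) ?_ (by linarith)
          exact (Finset.mem_filter.1 hx).2 ▸ hlower x
      _ = (F.filter (shell · = k)).card * ((2 : ℝ) ^ k) ^ (-γ) := by
          rw [Finset.sum_const, nsmul_eq_mul]
      _ ≤ C * ((2 : ℝ) ^ (k + 1)) ^ D * ((2 : ℝ) ^ k) ^ (-γ) := by gcongr
      _ = C * 2 ^ D * τ ^ k := by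
          rw [pow_succ', Real.mul_rpow two_pos.le (by positivity), ← mul_assoc, mul_assoc,
            ← Real.rpow_add (by positivity), ← sub_eq_add_neg, ← Real.rpow_pow_comm two_pos.le]
  refine summable_of_sum_le (c := ∑' k, C * 2 ^ D * τ ^ k) (fun x ↦ by positivity) fun F ↦ ?_
  rw [← Finset.sum_fiberwise_of_maps_to fun x hx ↦ Finset.mem_image_of_mem shell hx]
  exact (Finset.sum_le_sum fun k _ ↦ hshell F k).trans
    (hgeom.sum_le_tsum _ fun k _ ↦ by positivity)

theorem rpow_mul_rpow_mul_rpow_eq_pairwise {a b c t : ℝ} (ha : 0 ≤ a) (hb : 0 ≤ b) (hc : 0 ≤ c)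
    (ht : 1 / 2 ≤ t) (ht₁ : t ≤ 1) :
    a ^ t * b ^ t * c ^ (2 - 2 * t) =
      (a * b) ^ (2 * t - 1) * (a * c) ^ (1 - t) * (b * c) ^ (1 - t) := by
  have hexp (x : ℝ) (hx : 0 ≤ x) : x ^ t = x ^ (2 * t - 1) * x ^ (1 - t) := by
    rw [← Real.rpow_add_of_nonneg hx (by linarith) (by linarith)]
    ring_nf
  have hexp' : c ^ (2 - 2 * t) = c ^ (1 - t) * c ^ (1 - t) := by
    rw [← Real.rpow_add_of_nonneg hc (by linarith) (by linarith)]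
    ring_nf
  rw [Real.mul_rpow ha hb, Real.mul_rpow ha hc, Real.mul_rpow hb hc, hexp a ha, hexp b hb, hexp']
  ring

theorem sum_product_rpow_mul_rpow_mul_rpow_le {f : X → ℝ} {g : Y → ℝ} {K : X → Y → ℝ} {κ t : ℝ}
    (hf₀ : ∀ x, 0 ≤ f x) (hg₀ : ∀ y, 0 ≤ g y) (hK₀ : ∀ x y, 0 ≤ K x y) (hκ : 0 ≤ κ)
    (F : Finset X) (F' : Finset Y) (hrow : ∀ x ∈ F, ∑ y ∈ F', K x y ≤ κ)
    (hcol : ∀ y ∈ F', ∑ x ∈ F, K x y ≤ κ) (ht : 1 / 2 < t) (ht₁ : t < 1) :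
    ∑ z ∈ F ×ˢ F', f z.1 ^ t * g z.2 ^ t * K z.1 z.2 ^ (2 - 2 * t) ≤
      (∑ x ∈ F, f x) ^ t * (∑ y ∈ F', g y) ^ t * κ ^ (2 - 2 * t) := by
  set A := ∑ x ∈ F, f x
  set B := ∑ y ∈ F', g y
  have hA : 0 ≤ A := Finset.sum_nonneg fun x _ ↦ hf₀ x
  have hB : 0 ≤ B := Finset.sum_nonneg fun y _ ↦ hg₀ y
  have hfg : ∑ z ∈ F ×ˢ F', f z.1 * g z.2 = A * B := by
    rw [Finset.sum_product, Finset.sum_mul_sum]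
  have hfK : ∑ z ∈ F ×ˢ F', f z.1 * K z.1 z.2 ≤ A * κ := by
    simp only [Finset.sum_product, ← Finset.mul_sum, A, Finset.sum_mul]
    exact Finset.sum_le_sum fun x hx ↦ mul_le_mul_of_nonneg_left (hrow x hx) (hf₀ x)
  have hgK : ∑ z ∈ F ×ˢ F', g z.2 * K z.1 z.2 ≤ B * κ := by
    simp only [Finset.sum_product_right, ← Finset.mul_sum, B, Finset.sum_mul]
    exact Finset.sum_le_sum fun y hy ↦ mul_le_mul_of_nonneg_left (hcol y hy) (hg₀ y)
  have hfK₀ : 0 ≤ ∑ z ∈ F ×ˢ F', f z.1 * K z.1 z.2 :=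
    Finset.sum_nonneg fun z _ ↦ mul_nonneg (hf₀ _) (hK₀ _ _)
  have hgK₀ : 0 ≤ ∑ z ∈ F ×ˢ F', g z.2 * K z.1 z.2 :=
    Finset.sum_nonneg fun z _ ↦ mul_nonneg (hg₀ _) (hK₀ _ _)
  rw [rpow_mul_rpow_mul_rpow_eq_pairwise hA hB hκ ht.le ht₁.le]
  simp only [rpow_mul_rpow_mul_rpow_eq_pairwise (hf₀ _) (hg₀ _) (hK₀ _ _) ht.le ht₁.le]
  refine (sum_rpow_mul_rpow_mul_rpow_le _ (fun z ↦ mul_nonneg (hf₀ _) (hg₀ _))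
    (fun z ↦ mul_nonneg (hf₀ _) (hK₀ _ _)) (fun z ↦ mul_nonneg (hg₀ _) (hK₀ _ _))
    (by linarith) (by linarith) (by linarith) (by ring)).trans ?_
  rw [hfg]
  gcongr

theorem summable_and_tsum_rpow_mul_rpow_mul_rpow_le {f : X → ℝ} {g : Y → ℝ} {K : X → Y → ℝ}
    {κ t : ℝ} (hf₀ : ∀ x, 0 ≤ f x) (hg₀ : ∀ y, 0 ≤ g y) (hK₀ : ∀ x y, 0 ≤ K x y) (hκ : 0 ≤ κ)
    (hf : Summable f) (hg : Summable g) (hrow : ∀ x (F : Finset Y), ∑ y ∈ F, K x y ≤ κ)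
    (hcol : ∀ y (F : Finset X), ∑ x ∈ F, K x y ≤ κ) (ht : 1 / 2 < t) (ht₁ : t < 1) :
    Summable (fun z : X × Y ↦ f z.1 ^ t * g z.2 ^ t * K z.1 z.2 ^ (2 - 2 * t)) ∧
      ∑' z : X × Y, f z.1 ^ t * g z.2 ^ t * K z.1 z.2 ^ (2 - 2 * t) ≤
        (∑' x, f x) ^ t * (∑' y, g y) ^ t * κ ^ (2 - 2 * t) := by
  classical
  have hterm (z : X × Y) : 0 ≤ f z.1 ^ t * g z.2 ^ t * K z.1 z.2 ^ (2 - 2 * t) :=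
    mul_nonneg (mul_nonneg (Real.rpow_nonneg (hf₀ _) _) (Real.rpow_nonneg (hg₀ _) _))
      (Real.rpow_nonneg (hK₀ _ _) _)
  have hfinset (P : Finset (X × Y)) :
      ∑ z ∈ P, f z.1 ^ t * g z.2 ^ t * K z.1 z.2 ^ (2 - 2 * t) ≤
        (∑' x, f x) ^ t * (∑' y, g y) ^ t * κ ^ (2 - 2 * t) := by
    set F := P.image Prod.fst
    set F' := P.image Prod.snd
    have hF : 0 ≤ ∑ x ∈ F, f x := Finset.sum_nonneg fun x _ ↦ hf₀ x
    have hF' : 0 ≤ ∑ y ∈ F', g y := Finset.sum_nonneg fun y _ ↦ hg₀ y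
    calc _ ≤ ∑ z ∈ F ×ˢ F', f z.1 ^ t * g z.2 ^ t * K z.1 z.2 ^ (2 - 2 * t) :=
          Finset.sum_le_sum_of_subset_of_nonneg Finset.subset_product fun z _ _ ↦ hterm z
      _ ≤ (∑ x ∈ F, f x) ^ t * (∑ y ∈ F', g y) ^ t * κ ^ (2 - 2 * t) :=
          sum_product_rpow_mul_rpow_mul_rpow_le hf₀ hg₀ hK₀ hκ F F' (fun x _ ↦ hrow x F')
            (fun y _ ↦ hcol y F) ht ht₁
      _ ≤ _ := by
          have : 0 ≤ t := by linarith
          have hfF := hf.sum_le_tsum F fun x _ ↦ hf₀ x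
          have hgF := hg.sum_le_tsum F' fun y _ ↦ hg₀ y
          have hsum : 0 ≤ ∑' x, f x := tsum_nonneg hf₀
          gcongr
  exact ⟨summable_of_sum_le hterm hfinset, Real.tsum_le_of_sum_le hterm hfinset⟩

end Summability

section WordMetric

open scoped Pointwise

variable [Group G] {S : Finset G}

open Classical in
/-- The closed ball of radius `n` about `1` in the word metric of `S`, encoded as the pointwise
power `(S ∪ {1}) ^ n` so that it is a `Finset` by construction. -/
def wordBall (S : Finset G) (n : ℕ) : Finset G := insert 1 S ^ n

theorem one_mem_wordBall (n : ℕ) : 1 ∈ wordBall S n := by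
  classical exact Finset.one_mem_pow (Finset.mem_insert_self 1 S)

theorem wordBall_nonempty (n : ℕ) : (wordBall S n).Nonempty :=
  ⟨1, one_mem_wordBall n⟩

theorem wordBall_zero : wordBall S 0 = {1} := by
  classical exact pow_zero _

theorem mul_mem_wordBall {m n : ℕ} {g h : G} (hg : g ∈ wordBall S m) (hh : h ∈ wordBall S n) :
    g * h ∈ wordBall S (m + n) := by
  classical
  rw [wordBall, pow_add]
  exact Finset.mul_mem_mul hg hh

theorem inv_mem_wordBall (hS : ∀ s ∈ S, s⁻¹ ∈ S) {n : ℕ} {g : G} (hg : g ∈ wordBall S n) :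
    g⁻¹ ∈ wordBall S n := by
  classical
  have hinv : (insert 1 S : Finset G)⁻¹ ⊆ insert 1 S := by
    intro s hs
    rcases Finset.mem_insert.1 (Finset.mem_inv'.1 hs) with h | h
    · simp [inv_eq_one.1 h]
    · exact Finset.mem_insert_of_mem (by simpa using hS _ h)
  have h : g⁻¹ ∈ ((insert 1 S : Finset G) ^ n)⁻¹ := Finset.inv_mem_inv hg
  rw [← inv_pow] at h
  exact Finset.pow_subset_pow_left hinv h

theorem inv_mul_mem_wordBall (hS : ∀ s ∈ S, s⁻¹ ∈ S) {m n : ℕ} {g h : G}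
    (hg : g ∈ wordBall S m) (hh : h ∈ wordBall S n) : g⁻¹ * h ∈ wordBall S (m + n) :=
  mul_mem_wordBall (inv_mem_wordBall hS hg) hh

theorem wordBall_mono : Monotone (wordBall S) := fun _ _ h ↦ by
  classical exact Finset.pow_subset_pow_right (Finset.mem_insert_self 1 S) h

theorem wordDist_prod_le {l : List G} (hl : ∀ s ∈ l, s ∈ S) : wordDist S 1 l.prod ≤ l.length :=
  Nat.sInf_le ⟨l, hl, rfl, (one_mul _).symm⟩

theorem list_prod_mem_wordBall {l : List G} (hl : ∀ s ∈ l, s ∈ S) :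
    l.prod ∈ wordBall S l.length := by
  classical
  induction l with
  | nil => exact one_mem_wordBall 0
  | cons s l ih =>
    rw [List.forall_mem_cons] at hl
    rw [List.prod_cons, List.length_cons, wordBall, pow_succ']
    exact Finset.mul_mem_mul (Finset.mem_insert_of_mem hl.1) (ih hl.2)

theorem exists_list_of_mem_wordBall {n : ℕ} {g : G} (hg : g ∈ wordBall S n) :
    ∃ l : List G, (∀ s ∈ l, s ∈ S) ∧ l.length ≤ n ∧ l.prod = g := by
  classical
  induction n generalizing g with
  | zero => exact ⟨[], by simp, le_rfl, (Finset.mem_singleton.1 hg).symm⟩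
  | succ n ih =>
    rw [wordBall, pow_succ'] at hg
    obtain ⟨s, hs, h, hh, rfl⟩ := Finset.mem_mul.1 hg
    obtain ⟨l, hl, hlen, rfl⟩ := ih hh
    rcases Finset.mem_insert.1 hs with rfl | hs
    · exact ⟨l, hl, by omega, (one_mul _).symm⟩
    · exact ⟨s :: l, List.forall_mem_cons.2 ⟨hs, hl⟩, by simpa using hlen, rfl⟩

theorem exists_list_prod_eq_of_closure_eq_top (hgen : Subgroup.closure (S : Set G) = ⊤)
    (hS : ∀ s ∈ S, s⁻¹ ∈ S) (g : G) : ∃ l : List G, (∀ s ∈ l, s ∈ S) ∧ l.prod = g := by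
  have hg : g ∈ Submonoid.closure ((S : Set G) ∪ (S : Set G)⁻¹) := by
    rw [← Subgroup.closure_toSubmonoid, hgen]
    exact Submonoid.mem_top g
  obtain ⟨l, hl, hprod⟩ := Submonoid.exists_list_of_mem_closure hg
  refine ⟨l, fun s hs ↦ ?_, hprod⟩
  rcases hl s hs with h | h
  · exact h
  · simpa using hS _ h

theorem mem_wordBall_iff (hgen : Subgroup.closure (S : Set G) = ⊤) (hS : ∀ s ∈ S, s⁻¹ ∈ S)
    {n : ℕ} {g : G} : g ∈ wordBall S n ↔ wordDist S 1 g ≤ n := by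
  constructor
  · intro hg
    obtain ⟨l, hl, hlen, rfl⟩ := exists_list_of_mem_wordBall hg
    exact (wordDist_prod_le hl).trans hlen
  · intro hg
    obtain ⟨l, hl, rfl⟩ := exists_list_prod_eq_of_closure_eq_top hgen hS g
    obtain ⟨l', hl', hlen, hprod⟩ := Nat.sInf_mem
      (s := {k | ∃ l' : List G, (∀ s ∈ l', s ∈ S) ∧ l'.length = k ∧ l.prod = 1 * l'.prod})
      ⟨_, l, hl, rfl, (one_mul _).symm⟩
    rw [hprod, one_mul]
    exact wordBall_mono (hlen.trans_le hg) (list_prod_mem_wordBall hl')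

theorem wordDist_eq_wordDist_one (x y : G) : wordDist S x y = wordDist S 1 (x⁻¹ * y) := by
  simp only [wordDist, one_mul, inv_mul_eq_iff_eq_mul]

theorem wordDist_self (x : G) : wordDist S x x = 0 :=
  Nat.le_zero.1 <| Nat.sInf_le ⟨[], by simp, rfl, by simp⟩

/-- `(G, S)` has volume growth of exponent `D`: the ball of radius `n` has between `c (n + 1) ^ D`
and `C (n + 1) ^ D` elements. Writing `n + 1` instead of `n` makes the bounds
meaningful at `n = 0`. -/
structure HasVolumeGrowth (S : Finset G) (D c C : ℝ) : Prop where
  pos : 0 < c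
  le_card : ∀ n : ℕ, c * ((n : ℝ) + 1) ^ D ≤ (wordBall S n).card
  card_le : ∀ n : ℕ, (wordBall S n).card ≤ C * ((n : ℝ) + 1) ^ D

theorem natCard_wordDist_le (hgen : Subgroup.closure (S : Set G) = ⊤) (hS : ∀ s ∈ S, s⁻¹ ∈ S)
    (n : ℕ) : Nat.card {x : G // wordDist S 1 x ≤ n} = (wordBall S n).card :=
  Nat.subtype_card _ fun _ ↦ mem_wordBall_iff hgen hS

theorem HasVolumeGrowth.of_one_le {D c C : ℝ} (hD : 0 ≤ D) (hc : 0 < c)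
    (h : ∀ n : ℕ, 1 ≤ n →
      c * (n : ℝ) ^ D ≤ (wordBall S n).card ∧ (wordBall S n).card ≤ C * (n : ℝ) ^ D) :
    HasVolumeGrowth S D (min (c / 2 ^ D) 1) (max C 1) where
  pos := by positivity
  le_card n := by
    rcases Nat.eq_zero_or_pos n with rfl | hn
    · simp [wordBall_zero]
    have hn' : (1 : ℝ) ≤ n := mod_cast hn
    calc min (c / 2 ^ D) 1 * ((n : ℝ) + 1) ^ D ≤ c / 2 ^ D * (2 * n) ^ D := by
          gcongr
          · exact min_le_left _ _
          · linarith
      _ = c * (n : ℝ) ^ D := by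
          rw [Real.mul_rpow two_pos.le n.cast_nonneg]
          field_simp
      _ ≤ (wordBall S n).card := (h n hn).1
  card_le n := by
    rcases Nat.eq_zero_or_pos n with rfl | hn
    · simp [wordBall_zero]
    calc ((wordBall S n).card : ℝ) ≤ C * (n : ℝ) ^ D := (h n hn).2
      _ ≤ max C 1 * ((n : ℝ) + 1) ^ D := by
          gcongr
          · exact le_max_left _ _
          · linarith

end WordMetric

section Averages

open scoped Pointwise

variable [Group G] {S : Finset G} {p : ℝ} {u : G → ℝ}

theorem gradP_nonneg (x : G) : 0 ≤ gradP S p u x :=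
  Finset.sum_nonneg fun _ _ ↦ by positivity

theorem tsum_gradP_nonneg : 0 ≤ ∑' x, gradP S p u x :=
  tsum_nonneg gradP_nonneg

theorem sum_abs_sub_rpow_le_of_mem (hu : Summable (gradP S p u)) {s : G} (hs : s ∈ S)
    (F : Finset G) : ∑ x ∈ F, |u (x * s) - u x| ^ p ≤ ∑' x, gradP S p u x :=
  calc ∑ x ∈ F, |u (x * s) - u x| ^ p ≤ ∑ x ∈ F, gradP S p u x :=
        Finset.sum_le_sum fun x _ ↦ Finset.single_le_sum
          (f := fun s ↦ |u (x * s) - u x| ^ p) (fun _ _ ↦ by positivity) hs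
    _ ≤ ∑' x, gradP S p u x := hu.sum_le_tsum F fun x _ ↦ gradP_nonneg x

theorem Lp_sub_translate_le (hp : 1 ≤ p) (hu : Summable (gradP S p u)) {n : ℕ} {z : G}
    (hz : z ∈ wordBall S n) (F : Finset G) :
    (∑ x ∈ F, |u (x * z) - u x| ^ p) ^ (1 / p) ≤ n * (∑' x, gradP S p u x) ^ (1 / p) := by
  classical
  have hp₀ : 0 < p := by linarith
  induction n generalizing z with
  | zero =>
    rw [wordBall_zero, Finset.mem_singleton] at hz
    simp [hz, Real.zero_rpow hp₀.ne', Real.zero_rpow (inv_pos.2 hp₀).ne']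
  | succ n ih =>
    rw [wordBall, pow_succ] at hz
    obtain ⟨g, hg, s, hs, rfl⟩ := Finset.mem_mul.1 hz
    have hlast : ∑ x ∈ F, |u (x * (g * s)) - u (x * g)| ^ p ≤ ∑' x, gradP S p u x := by
      rcases Finset.mem_insert.1 hs with rfl | hs
      · simp [Real.zero_rpow hp₀.ne', tsum_gradP_nonneg]
      · have h := sum_abs_sub_rpow_le_of_mem hu hs (F.map (Equiv.mulRight g).toEmbedding)
        simpa only [Finset.sum_map, Equiv.coe_toEmbedding, Equiv.coe_mulRight, mul_assoc] using h
    calc (∑ x ∈ F, |u (x * (g * s)) - u x| ^ p) ^ (1 / p)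
        = (∑ x ∈ F, |(u (x * (g * s)) - u (x * g)) + (u (x * g) - u x)| ^ p) ^ (1 / p) := by
          simp only [sub_add_sub_cancel]
      _ ≤ (∑ x ∈ F, |u (x * (g * s)) - u (x * g)| ^ p) ^ (1 / p) +
            (∑ x ∈ F, |u (x * g) - u x| ^ p) ^ (1 / p) := Real.Lp_add_le F _ _ hp
      _ ≤ (∑' x, gradP S p u x) ^ (1 / p) + n * (∑' x, gradP S p u x) ^ (1 / p) := by
          gcongr
          exact ih hg
      _ = (n + 1 : ℕ) * (∑' x, gradP S p u x) ^ (1 / p) := by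
          push_cast
          ring

theorem sum_abs_sub_rpow_le (hp : 1 ≤ p) (hu : Summable (gradP S p u)) {n : ℕ} {g h : G}
    (hgh : g⁻¹ * h ∈ wordBall S n) (F : Finset G) :
    ∑ x ∈ F, |u (x * g) - u (x * h)| ^ p ≤ (n : ℝ) ^ p * ∑' x, gradP S p u x := by
  have hp₀ : 0 < p := by linarith
  have hE : 0 ≤ ∑' x, gradP S p u x := tsum_gradP_nonneg
  have h := Lp_sub_translate_le hp hu hgh (F.map (Equiv.mulRight g).toEmbedding)
  simp only [Finset.sum_map, Equiv.coe_toEmbedding, Equiv.coe_mulRight, mul_assoc,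
    mul_inv_cancel_left, one_div] at h
  rw [Real.rpow_inv_le_iff_of_pos (by positivity) (by positivity) hp₀,
    Real.mul_rpow n.cast_nonneg (by positivity), Real.rpow_inv_rpow hE hp₀.ne'] at h
  simpa only [abs_sub_comm] using h

/-- The average of `u` over the translate `x * A`. With `A` a ball this is the mean of `u` over
the ball of the same radius about `x`. -/
def translateAvg (A : Finset G) (u : G → ℝ) (x : G) : ℝ := 𝔼 g ∈ A, u (x * g)

theorem translateAvg_singleton_one (u : G → ℝ) (x : G) : translateAvg {1} u x = u x := by
  rw [translateAvg, Finset.expect_singleton, mul_one]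

theorem tendsto_translateAvg_zero {ι : Type*} {l : Filter ι} {A : ι → Finset G}
    (hA : Tendsto (fun k ↦ (A k).card) l atTop) (hu : Tendsto u cofinite (𝓝 0)) (x : G) :
    Tendsto (fun k ↦ translateAvg (A k) u x) l (𝓝 0) :=
  tendsto_expect_zero hA (hu.comp (mul_right_injective x).tendsto_cofinite)

variable {A B : Finset G} {n : ℕ}

theorem abs_translateAvg_sub_rpow_le (hp : 1 ≤ p) (hA : A.Nonempty) (hB : B.Nonempty) (x : G) :
    |translateAvg A u x - translateAvg B u x| ^ p ≤
      𝔼 g ∈ A, 𝔼 h ∈ B, |u (x * g) - u (x * h)| ^ p := by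
  have hdouble : translateAvg A u x - translateAvg B u x =
      𝔼 g ∈ A, 𝔼 h ∈ B, (u (x * g) - u (x * h)) := by
    simp only [translateAvg, Finset.expect_sub_distrib, Finset.expect_const hA,
      Finset.expect_const hB]
  rw [hdouble]
  exact (abs_expect_rpow_le _ _ hp).trans
    (Finset.expect_le_expect fun g _ ↦ abs_expect_rpow_le _ _ hp)

theorem sum_abs_translateAvg_sub_rpow_le (hp : 1 ≤ p) (hu : Summable (gradP S p u))
    (hA : A.Nonempty) (hB : B.Nonempty) (hAB : ∀ g ∈ A, ∀ h ∈ B, g⁻¹ * h ∈ wordBall S n)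
    (F : Finset G) :
    ∑ x ∈ F, |translateAvg A u x - translateAvg B u x| ^ p ≤
      (n : ℝ) ^ p * ∑' x, gradP S p u x :=
  calc ∑ x ∈ F, |translateAvg A u x - translateAvg B u x| ^ p
      ≤ ∑ x ∈ F, 𝔼 g ∈ A, 𝔼 h ∈ B, |u (x * g) - u (x * h)| ^ p :=
        Finset.sum_le_sum fun x _ ↦ abs_translateAvg_sub_rpow_le hp hA hB x
    _ = 𝔼 g ∈ A, 𝔼 h ∈ B, ∑ x ∈ F, |u (x * g) - u (x * h)| ^ p := by
        simp only [Finset.expect_sum_comm]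
    _ ≤ (n : ℝ) ^ p * ∑' x, gradP S p u x :=
        Finset.expect_le hA fun g hg ↦ Finset.expect_le hB fun h hh ↦
          sum_abs_sub_rpow_le hp hu (hAB g hg h hh) F

theorem sum_sum_abs_sub_rpow_le_card_mul (hp : 1 ≤ p) (hu : Summable (gradP S p u))
    (hAB : ∀ g ∈ A, ∀ h ∈ B, g⁻¹ * h ∈ wordBall S n) (x : G) :
    ∑ g ∈ A, ∑ h ∈ B, |u (x * g) - u (x * h)| ^ p ≤
      (wordBall S n).card * ((n : ℝ) ^ p * ∑' x, gradP S p u x) :=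
  -- For fixed `z = g⁻¹ * h` the terms form a single translation difference, so summing over all
  -- pairs only costs the number of possible `z`.
  calc ∑ g ∈ A, ∑ h ∈ B, |u (x * g) - u (x * h)| ^ p
      = ∑ g ∈ A, ∑ z ∈ B.map (Equiv.mulLeft g⁻¹).toEmbedding,
          |u (x * g) - u (x * g * z)| ^ p := by
        simp only [Finset.sum_map, Equiv.coe_toEmbedding, Equiv.coe_mulLeft, mul_assoc,
          mul_inv_cancel_left]
    _ ≤ ∑ g ∈ A, ∑ z ∈ wordBall S n, |u (x * g) - u (x * g * z)| ^ p := by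
        refine Finset.sum_le_sum fun g hg ↦ Finset.sum_le_sum_of_subset_of_nonneg ?_
          fun _ _ _ ↦ by positivity
        intro z hz
        obtain ⟨h, hh, rfl⟩ := Finset.mem_map.1 hz
        exact hAB g hg h hh
    _ = ∑ z ∈ wordBall S n, ∑ y ∈ A.map (Equiv.mulLeft x).toEmbedding,
          |u (y * 1) - u (y * z)| ^ p := by
        rw [Finset.sum_comm]
        simp only [Finset.sum_map, Equiv.coe_toEmbedding, Equiv.coe_mulLeft, mul_one]
    _ ≤ (wordBall S n).card * ((n : ℝ) ^ p * ∑' x, gradP S p u x) := by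
        rw [← nsmul_eq_mul]
        refine Finset.sum_le_card_nsmul _ _ _ fun z hz ↦ ?_
        exact sum_abs_sub_rpow_le hp hu (by simpa using hz) _

theorem abs_translateAvg_sub_rpow_le_card (hp : 1 ≤ p) (hu : Summable (gradP S p u))
    (hA : A.Nonempty) (hB : B.Nonempty) (hAB : ∀ g ∈ A, ∀ h ∈ B, g⁻¹ * h ∈ wordBall S n)
    (x : G) :
    |translateAvg A u x - translateAvg B u x| ^ p ≤
      (wordBall S n).card / (A.card * B.card) * ((n : ℝ) ^ p * ∑' x, gradP S p u x) := by
  calc |translateAvg A u x - translateAvg B u x| ^ p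
      ≤ 𝔼 g ∈ A, 𝔼 h ∈ B, |u (x * g) - u (x * h)| ^ p :=
        abs_translateAvg_sub_rpow_le hp hA hB x
    _ = (∑ g ∈ A, ∑ h ∈ B, |u (x * g) - u (x * h)| ^ p) / (A.card * B.card) := by
        simp only [Finset.expect_eq_sum_div_card, ← Finset.sum_div, div_div, mul_comm]
    _ ≤ _ := by
        rw [div_mul_eq_mul_div]
        gcongr
        exact sum_sum_abs_sub_rpow_le_card_mul hp hu hAB x

end Averages

section Sobolev

variable [Group G] {S : Finset G} {D c C p q : ℝ} {u : G → ℝ}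

/-- The closed ball of radius `2 ^ k - 1` about `1`. This radius makes the ball a singleton for
`k = 0` and its volume comparable to `(2 ^ k) ^ D` under volume growth of exponent `D`. -/
def dyadicBall (S : Finset G) (k : ℕ) : Finset G := wordBall S (2 ^ k - 1)

theorem dyadicBall_zero : dyadicBall S 0 = {1} := wordBall_zero

theorem dyadicBall_nonempty (k : ℕ) : (dyadicBall S k).Nonempty := wordBall_nonempty _

theorem inv_mul_mem_dyadicBall (hS : ∀ s ∈ S, s⁻¹ ∈ S) {k : ℕ} {g h : G}
    (hg : g ∈ dyadicBall S k) (hh : h ∈ dyadicBall S (k + 1)) :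
    g⁻¹ * h ∈ dyadicBall S (k + 2) := by
  refine wordBall_mono ?_ (inv_mul_mem_wordBall hS hg hh)
  rw [pow_succ, pow_succ]
  omega

theorem natCast_two_pow_sub_one_add_one (k : ℕ) : ((2 ^ k - 1 : ℕ) : ℝ) + 1 = 2 ^ k := by
  rw [Nat.cast_pred (by positivity)]
  push_cast
  ring

theorem HasVolumeGrowth.le_card_dyadicBall (h : HasVolumeGrowth S D c C) (k : ℕ) :
    c * (2 ^ k) ^ D ≤ (dyadicBall S k).card := by
  simpa only [dyadicBall, natCast_two_pow_sub_one_add_one] using h.le_card (2 ^ k - 1)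

theorem HasVolumeGrowth.card_dyadicBall_le (h : HasVolumeGrowth S D c C) (k : ℕ) :
    (dyadicBall S k).card ≤ C * (2 ^ k) ^ D := by
  simpa only [dyadicBall, natCast_two_pow_sub_one_add_one] using h.card_le (2 ^ k - 1)

theorem HasVolumeGrowth.upper_nonneg (h : HasVolumeGrowth S D c C) : 0 ≤ C :=
  (Nat.cast_nonneg _).trans (by simpa using h.card_le 0)

theorem HasVolumeGrowth.tendsto_card_dyadicBall (h : HasVolumeGrowth S D c C) (hD : 0 < D) :
    Tendsto (fun k ↦ (dyadicBall S k).card) atTop atTop := by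
  have hpow : Tendsto (fun k : ℕ ↦ c * ((2 : ℝ) ^ k) ^ D) atTop atTop :=
    ((tendsto_rpow_atTop hD).comp (tendsto_pow_atTop_atTop_of_one_lt one_lt_two)).const_mul_atTop
      h.pos
  exact tendsto_natCast_atTop_iff.1 (tendsto_atTop_mono h.le_card_dyadicBall hpow)

/-- The difference of consecutive dyadic averages of `u`. -/
def dyadicDiff (S : Finset G) (u : G → ℝ) (k : ℕ) (x : G) : ℝ :=
  translateAvg (dyadicBall S k) u x - translateAvg (dyadicBall S (k + 1)) u x

theorem natCast_two_pow_add_two_sub_one_le (k : ℕ) : ((2 ^ (k + 2) - 1 : ℕ) : ℝ) ≤ 4 * 2 ^ k := by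
  linarith [natCast_two_pow_sub_one_add_one (k + 2), pow_add (2 : ℝ) k 2]

theorem sum_abs_dyadicDiff_rpow_le (hS : ∀ s ∈ S, s⁻¹ ∈ S) (hp : 1 ≤ p)
    (hu : Summable (gradP S p u)) (k : ℕ) (F : Finset G) :
    ∑ x ∈ F, |dyadicDiff S u k x| ^ p ≤ 4 ^ p * (2 ^ k) ^ p * ∑' x, gradP S p u x := by
  have hE : 0 ≤ ∑' x, gradP S p u x := tsum_gradP_nonneg
  refine (sum_abs_translateAvg_sub_rpow_le hp hu (dyadicBall_nonempty k) (dyadicBall_nonempty _)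
    (fun g hg h hh ↦ inv_mul_mem_dyadicBall hS hg hh) F).trans ?_
  rw [← Real.mul_rpow (by norm_num) (by positivity)]
  gcongr
  exact natCast_two_pow_add_two_sub_one_le k

theorem HasVolumeGrowth.card_dyadicBall_div_le (h : HasVolumeGrowth S D c C) (hD : 0 ≤ D)
    (k : ℕ) :
    ((dyadicBall S (k + 2)).card : ℝ) / ((dyadicBall S k).card * (dyadicBall S (k + 1)).card) ≤
      C * 4 ^ D / c ^ 2 * (2 ^ k) ^ (-D) := by
  have hc := h.pos
  have hC := h.upper_nonneg
  have hnum : ((dyadicBall S (k + 2)).card : ℝ) ≤ C * (4 ^ D * (2 ^ k) ^ D) := by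
    convert h.card_dyadicBall_le (k + 2) using 2
    rw [← Real.mul_rpow (by norm_num) (by positivity)]
    ring_nf
  have hden : c * (2 ^ k) ^ D ≤ (dyadicBall S (k + 1)).card := by
    refine le_trans ?_ (h.le_card_dyadicBall (k + 1))
    gcongr
    · norm_num
    · omega
  calc _ ≤ C * (4 ^ D * (2 ^ k) ^ D) / (c * (2 ^ k) ^ D * (c * (2 ^ k) ^ D)) := by
        gcongr
        exact h.le_card_dyadicBall k
    _ = C * 4 ^ D / c ^ 2 * (2 ^ k) ^ (-D) := by
        rw [Real.rpow_neg (by positivity)]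
        field_simp

theorem abs_dyadicDiff_rpow_le (hS : ∀ s ∈ S, s⁻¹ ∈ S) (h : HasVolumeGrowth S D c C)
    (hD : 0 ≤ D) (hp : 1 ≤ p) (hu : Summable (gradP S p u)) (k : ℕ) (x : G) :
    |dyadicDiff S u k x| ^ p ≤
      4 ^ p * (C * 4 ^ D / c ^ 2) * (2 ^ k) ^ (p - D) * ∑' x, gradP S p u x := by
  have hE : 0 ≤ ∑' x, gradP S p u x := tsum_gradP_nonneg
  have hC := h.upper_nonneg
  calc |dyadicDiff S u k x| ^ p
      ≤ (C * 4 ^ D / c ^ 2 * (2 ^ k) ^ (-D)) * ((4 * 2 ^ k) ^ p * ∑' x, gradP S p u x) := by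
        refine (abs_translateAvg_sub_rpow_le_card hp hu (dyadicBall_nonempty k)
          (dyadicBall_nonempty _) (fun g hg h hh ↦ inv_mul_mem_dyadicBall hS hg hh) x).trans ?_
        gcongr
        · exact h.card_dyadicBall_div_le hD k
        · exact natCast_two_pow_add_two_sub_one_le k
    _ = _ := by
        rw [Real.mul_rpow (by norm_num) (by positivity), sub_eq_neg_add,
          Real.rpow_add (by positivity)]
        ring

/-- The constant in the `ℓ^q` bounds on dyadic differences: it dominates the constants of both
the `ℓ^p` and the `ℓ^∞` bound. -/
def dyadicConst (D c C p : ℝ) : ℝ := 4 ^ p * max 1 (C * 4 ^ D / c ^ 2)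

theorem dyadicConst_pos : 0 < dyadicConst D c C p := by
  unfold dyadicConst
  positivity

theorem mul_rpow_interpolation_eq {M s : ℝ} (hM : 0 ≤ M) (hs : 0 < s) (hp : 0 < p)
    (hpq : p ≤ q) :
    (M * s ^ (p - D)) ^ ((q - p) / p) * (M * s ^ p) =
      (M ^ (1 / p) * s ^ (1 + D / q - D / p)) ^ q := by
  have hq : 0 < q := hp.trans_le hpq
  have hexp : 0 ≤ (q - p) / p := div_nonneg (by linarith) hp.le
  calc (M * s ^ (p - D)) ^ ((q - p) / p) * (M * s ^ p)
      = M ^ ((q - p) / p + 1) * s ^ ((p - D) * ((q - p) / p) + p) := by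
        rw [Real.mul_rpow hM (by positivity), ← Real.rpow_mul hs.le,
          Real.rpow_add_of_nonneg hM hexp zero_le_one, Real.rpow_one, Real.rpow_add hs]
        ring
    _ = M ^ (1 / p * q) * s ^ ((1 + D / q - D / p) * q) := by
        congr 2 <;> field_simp <;> ring
    _ = (M ^ (1 / p) * s ^ (1 + D / q - D / p)) ^ q := by
        rw [Real.mul_rpow (by positivity) (by positivity), ← Real.rpow_mul hM,
          ← Real.rpow_mul hs.le]

theorem sum_abs_dyadicDiff_rpow_le_geometric (hS : ∀ s ∈ S, s⁻¹ ∈ S)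
    (h : HasVolumeGrowth S D c C) (hD : 0 ≤ D) (hp : 1 ≤ p) (hpq : p ≤ q)
    (hu : Summable (gradP S p u)) (k : ℕ) (F : Finset G) :
    ∑ x ∈ F, |dyadicDiff S u k x| ^ q ≤
      ((dyadicConst D c C p * ∑' x, gradP S p u x) ^ (1 / p) *
        ((2 : ℝ) ^ (1 + D / q - D / p)) ^ k) ^ q := by
  have hp₀ : 0 < p := by linarith
  have hKp : 4 ^ p ≤ dyadicConst D c C p :=
    le_mul_of_one_le_right (by positivity) (le_max_left _ _)
  have hKsup : 4 ^ p * (C * 4 ^ D / c ^ 2) ≤ dyadicConst D c C p :=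
    mul_le_mul_of_nonneg_left (le_max_right _ _) (by positivity)
  set K := dyadicConst D c C p
  set E := ∑' x, gradP S p u x
  have hK : 0 < K := dyadicConst_pos
  have hE : 0 ≤ E := tsum_gradP_nonneg
  have hsup (x : G) : |dyadicDiff S u k x| ^ p ≤ K * E * (2 ^ k) ^ (p - D) := by
    refine (abs_dyadicDiff_rpow_le hS h hD hp hu k x).trans ?_
    rw [mul_right_comm]
    gcongr
  have hsum : ∑ x ∈ F, |dyadicDiff S u k x| ^ p ≤ K * E * (2 ^ k) ^ p := by
    refine (sum_abs_dyadicDiff_rpow_le hS hp hu k F).trans ?_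
    rw [mul_right_comm]
    gcongr
  calc ∑ x ∈ F, |dyadicDiff S u k x| ^ q
      ≤ (K * E * (2 ^ k) ^ (p - D)) ^ ((q - p) / p) * ∑ x ∈ F, |dyadicDiff S u k x| ^ p :=
        sum_abs_rpow_le_of_forall_le hp₀ hpq fun x _ ↦ hsup x
    _ ≤ (K * E * (2 ^ k) ^ (p - D)) ^ ((q - p) / p) * (K * E * (2 ^ k) ^ p) := by gcongr
    _ = _ := by
        rw [Real.rpow_pow_comm two_pos.le]
        exact mul_rpow_interpolation_eq (by positivity) (by positivity) hp₀ hpq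

theorem sum_abs_rpow_le_of_tendsto_zero (hS : ∀ s ∈ S, s⁻¹ ∈ S) (h : HasVolumeGrowth S D c C)
    (hD : 0 < D) (hp : 1 ≤ p) (hpq : p ≤ q) (hsub : 1 + D / q < D / p)
    (hu₀ : Tendsto u cofinite (𝓝 0)) (hu : Summable (gradP S p u)) (F : Finset G) :
    ∑ x ∈ F, |u x| ^ q ≤
      ((dyadicConst D c C p * ∑' x, gradP S p u x) ^ (1 / p) /
        (1 - 2 ^ (1 + D / q - D / p))) ^ q := by
  have hK : 0 < dyadicConst D c C p := dyadicConst_pos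
  have hE : 0 ≤ ∑' x, gradP S p u x := tsum_gradP_nonneg
  have hr : (2 : ℝ) ^ (1 + D / q - D / p) < 1 :=
    Real.rpow_lt_one_of_one_lt_of_neg one_lt_two (by linarith)
  have htelescope := sum_abs_rpow_le_of_geometric F
    (U := fun k x ↦ translateAvg (dyadicBall S k) u x) (hp.trans hpq)
    (by positivity) (by positivity) hr
    (fun k ↦ sum_abs_dyadicDiff_rpow_le_geometric hS h hD.le hp hpq hu k F)
    (fun x ↦ tendsto_translateAvg_zero (h.tendsto_card_dyadicBall hD) hu₀ x)
  simpa only [dyadicBall_zero, translateAvg_singleton_one] using htelescope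

theorem exists_subcritical_sobolev_const (hS : ∀ s ∈ S, s⁻¹ ∈ S)
    (h : HasVolumeGrowth S D c C) (hD : 0 < D) (hp : 1 ≤ p) (hpq : p ≤ q)
    (hsub : 1 + D / q < D / p) :
    ∃ A : ℝ, 0 < A ∧ ∀ u : G → ℝ, Tendsto u cofinite (𝓝 0) → Summable (gradP S p u) →
      Summable (fun x ↦ |u x| ^ q) ∧ ∑' x, |u x| ^ q ≤ A * (∑' x, gradP S p u x) ^ (q / p) := by
  have hK : 0 < dyadicConst D c C p := dyadicConst_pos
  have hr : 0 < 1 - (2 : ℝ) ^ (1 + D / q - D / p) :=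
    sub_pos.2 (Real.rpow_lt_one_of_one_lt_of_neg one_lt_two (by linarith))
  refine ⟨(dyadicConst D c C p ^ (1 / p) / (1 - 2 ^ (1 + D / q - D / p))) ^ q, by positivity,
    fun u hu₀ hu ↦ ?_⟩
  have hE : 0 ≤ ∑' x, gradP S p u x := tsum_gradP_nonneg
  have hbound := sum_abs_rpow_le_of_tendsto_zero hS h hD hp hpq hsub hu₀ hu
  rw [Real.mul_rpow hK.le hE, mul_div_right_comm, Real.mul_rpow (by positivity) (by positivity),
    ← Real.rpow_mul hE, one_div_mul_eq_div] at hbound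
  exact ⟨summable_of_sum_le (fun x ↦ by positivity) hbound,
    Real.tsum_le_of_sum_le (fun x ↦ by positivity) hbound⟩

end Sobolev

section Kernel

variable [Group G] {S : Finset G} {D c C α b β p t : ℝ} {R : G → G → ℝ}

theorem HasVolumeGrowth.summable_wordDist_rpow_neg (h : HasVolumeGrowth S D c C)
    (hgen : Subgroup.closure (S : Set G) = ⊤) (hS : ∀ s ∈ S, s⁻¹ ∈ S) (hD : 0 ≤ D) (hβ : D < β) :
    Summable fun x ↦ ((wordDist S 1 x : ℝ) + 1) ^ (-β) :=
  summable_rpow_neg_of_card_le hD hβ fun n _ hF ↦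
    (Nat.cast_le.2 (Finset.card_le_card fun x hx ↦ (mem_wordBall_iff hgen hS).2 (hF x hx))).trans
      (h.card_le n)

theorem summable_and_tsum_rpow_mul_rpow_mul_convolution_le {f k : G → ℝ} (hf₀ : ∀ x, 0 ≤ f x)
    (hf : Summable f) (hk₀ : ∀ x, 0 ≤ k x) (hk : Summable k) (ht : 1 / 2 < t) (ht₁ : t < 1) :
    Summable (fun z : G × G ↦ f z.1 ^ t * f z.2 ^ t * k (z.1⁻¹ * z.2) ^ (2 - 2 * t)) ∧
      ∑' z : G × G, f z.1 ^ t * f z.2 ^ t * k (z.1⁻¹ * z.2) ^ (2 - 2 * t) ≤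
        (∑' x, f x) ^ (2 * t) * (∑' x, k x) ^ (2 - 2 * t) := by
  have hrow (x : G) (F : Finset G) : ∑ y ∈ F, k (x⁻¹ * y) ≤ ∑' z, k z := by
    simpa only [Finset.sum_map, Equiv.coe_toEmbedding, Equiv.coe_mulLeft] using
      hk.sum_le_tsum (F.map (Equiv.mulLeft x⁻¹).toEmbedding) fun z _ ↦ hk₀ z
  have hcol (y : G) (F : Finset G) : ∑ x ∈ F, k (x⁻¹ * y) ≤ ∑' z, k z := by
    simpa only [Finset.sum_map, Equiv.coe_toEmbedding, Equiv.coe_trans, Function.comp_apply,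
      Equiv.inv_apply, Equiv.coe_mulRight] using
      hk.sum_le_tsum (F.map ((Equiv.inv G).trans (Equiv.mulRight y)).toEmbedding) fun z _ ↦ hk₀ z
  have h := summable_and_tsum_rpow_mul_rpow_mul_rpow_le (K := fun x y ↦ k (x⁻¹ * y)) hf₀ hf₀
    (fun x y ↦ hk₀ (x⁻¹ * y)) (tsum_nonneg hk₀) hf hf hrow hcol ht ht₁
  rwa [← Real.rpow_add_of_nonneg (tsum_nonneg hf₀) (by linarith) (by linarith), ← two_mul] at h

theorem exists_summable_and_tsum_kernel_le (hgen : Subgroup.closure (S : Set G) = ⊤)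
    (hS : ∀ s ∈ S, s⁻¹ ∈ S) (h : HasVolumeGrowth S D c C) (hD : 0 ≤ D)
    (hR₀ : ∀ x y, 0 ≤ R x y) (hR : ∀ x y, R x y ≤ b * ((wordDist S x y : ℝ) + 1) ^ (-β))
    (ht : 1 / 2 < t) (ht₁ : t < 1) (hβ : (2 - 2 * t) * D < β) :
    ∃ B : ℝ, 0 ≤ B ∧ ∀ f : G → ℝ, (∀ x, 0 ≤ f x) → Summable f →
      Summable (fun z : G × G ↦ R z.1 z.2 * f z.2 ^ t * f z.1 ^ t) ∧
        ∑' z : G × G, R z.1 z.2 * f z.2 ^ t * f z.1 ^ t ≤ B * (∑' x, f x) ^ (2 * t) := by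
  have hw : 0 < 2 - 2 * t := by linarith
  let k (x : G) : ℝ := ((wordDist S 1 x : ℝ) + 1) ^ (-(β / (2 - 2 * t)))
  have hk₀ (x : G) : 0 ≤ k x := by positivity
  have hk : Summable k := h.summable_wordDist_rpow_neg hgen hS hD (by rwa [lt_div_iff₀' hw])
  have hb : 0 ≤ b := by simpa [wordDist_self] using (hR₀ 1 1).trans (hR 1 1)
  have hRk (x y : G) : R x y ≤ b * k (x⁻¹ * y) ^ (2 - 2 * t) := by
    rw [← Real.rpow_mul (by positivity), neg_mul, div_mul_cancel₀ _ hw.ne',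
      ← wordDist_eq_wordDist_one]
    exact hR x y
  have : 0 ≤ ∑' z, k z := tsum_nonneg hk₀
  refine ⟨b * (∑' z, k z) ^ (2 - 2 * t), by positivity, fun f hf₀ hf ↦ ?_⟩
  obtain ⟨hsum, hle⟩ :=
    summable_and_tsum_rpow_mul_rpow_mul_convolution_le hf₀ hf hk₀ hk ht ht₁
  have hterm (z : G × G) : R z.1 z.2 * f z.2 ^ t * f z.1 ^ t ≤
      b * (f z.1 ^ t * f z.2 ^ t * k (z.1⁻¹ * z.2) ^ (2 - 2 * t)) := by
    have hf₁ := Real.rpow_nonneg (hf₀ z.1) t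
    have hf₂ := Real.rpow_nonneg (hf₀ z.2) t
    calc _ ≤ b * k (z.1⁻¹ * z.2) ^ (2 - 2 * t) * f z.2 ^ t * f z.1 ^ t := by
          gcongr
          exact hRk _ _
      _ = _ := by ring
  have hsummable : Summable fun z : G × G ↦ R z.1 z.2 * f z.2 ^ t * f z.1 ^ t :=
    (hsum.mul_left b).of_nonneg_of_le (fun z ↦ mul_nonneg (mul_nonneg (hR₀ _ _)
      (Real.rpow_nonneg (hf₀ _) _)) (Real.rpow_nonneg (hf₀ _) _)) hterm
  refine ⟨hsummable, (hsummable.tsum_le_tsum hterm (hsum.mul_left b)).trans ?_⟩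
  rw [tsum_mul_left, mul_assoc, mul_comm (_ ^ (2 - 2 * t))]
  gcongr

theorem wordDist_pos (hgen : Subgroup.closure (S : Set G) = ⊤) (hS : ∀ s ∈ S, s⁻¹ ∈ S) {x y : G}
    (hxy : x ≠ y) : 0 < wordDist S x y := by
  by_contra h
  have hball : x⁻¹ * y ∈ wordBall S 0 := by
    rw [mem_wordBall_iff hgen hS, ← wordDist_eq_wordDist_one]
    omega
  rw [wordBall_zero, Finset.mem_singleton, inv_mul_eq_one] at hball
  exact hxy hball

theorem kernel_le_wordDist_add_one_rpow (hgen : Subgroup.closure (S : Set G) = ⊤)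
    (hS : ∀ s ∈ S, s⁻¹ ∈ S) (hb : 0 ≤ b) (hβ : 0 ≤ β)
    (hoff : ∀ x y, x ≠ y → R x y ≤ b * (wordDist S x y : ℝ) ^ (-β)) (hdiag : ∀ x, R x x ≤ b)
    (x y : G) : R x y ≤ b * 2 ^ β * ((wordDist S x y : ℝ) + 1) ^ (-β) := by
  rcases eq_or_ne x y with rfl | hxy
  · have htwo : (1 : ℝ) ≤ 2 ^ β := Real.one_le_rpow one_le_two hβ
    simpa [wordDist_self] using (hdiag x).trans (le_mul_of_one_le_right hb htwo)
  · have hd : (1 : ℝ) ≤ wordDist S x y := mod_cast wordDist_pos hgen hS hxy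
    calc R x y ≤ b * (wordDist S x y : ℝ) ^ (-β) := hoff x y hxy
      _ ≤ b * (((wordDist S x y : ℝ) + 1) / 2) ^ (-β) := by
          gcongr ?_ * ?_
          exact Real.rpow_le_rpow_of_nonpos (by positivity) (by linarith) (by linarith)
      _ = b * 2 ^ β * ((wordDist S x y : ℝ) + 1) ^ (-β) := by
          rw [Real.div_rpow (by positivity) two_pos.le, Real.rpow_neg two_pos.le, div_inv_eq_mul]
          ring

end Kernel

theorem energy_eq_tsum_prod {R : G → G → ℝ} {p : ℝ} {u : G → ℝ}
    (h : Summable fun z : G × G ↦ R z.1 z.2 * |u z.2| ^ p * |u z.1| ^ p) :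
    energy R p u = ∑' z : G × G, R z.1 z.2 * |u z.2| ^ p * |u z.1| ^ p := by
  rw [h.tsum_prod]
  simp only [energy, conv, tsum_mul_right]

theorem Memlp.tendsto_cofinite_zero {q : ℝ} {u : G → ℝ} (hq : 0 < q) (hu : Memlp q u) :
    Tendsto u cofinite (𝓝 0) := by
  rw [tendsto_zero_iff_abs_tendsto_zero]
  have h := (Summable.tendsto_cofinite_zero hu).rpow_const (p := q⁻¹) (Or.inr (by positivity))
  simpa only [Real.rpow_rpow_inv (abs_nonneg _) hq.ne', Real.zero_rpow (inv_pos.2 hq).ne',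
    Function.comp_def] using h

theorem exists_interpolation_exponent {D α p : ℝ} (hα : 0 ≤ α) (hp₀ : 0 < p)
    (hp : p < (D - α) / 2) :
    ∃ t : ℝ, 1 / 2 < t ∧ t < 1 ∧ (2 - 2 * t) * D < D - α ∧ 1 + D / (p / t) < D / p := by
  have hD : 0 < D := by linarith
  obtain ⟨t, ht_lower, ht_upper⟩ : ∃ t, (D + α) / (2 * D) < t ∧ t < 1 - p / D := by
    refine exists_between ?_
    rw [one_sub_div hD.ne', div_lt_div_iff₀ (by positivity) hD]
    nlinarith
  refine ⟨t, ?_, ht_upper.trans (sub_lt_self _ (by positivity)), ?_, ?_⟩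
  · refine lt_of_le_of_lt ?_ ht_lower
    rw [div_le_div_iff₀ two_pos (by positivity)]
    linarith
  · rw [div_lt_iff₀ (by positivity)] at ht_lower
    linarith
  · rw [lt_sub_comm, div_lt_iff₀ hD] at ht_upper
    rw [div_div_eq_mul_div, one_add_div hp₀.ne']
    gcongr
    linarith

theorem sobolev_type_inequality_pLaplace_general [Group G] {S : Finset G}
    (hS_gen : Subgroup.closure (S : Set G) = ⊤) (hS_sym : ∀ s ∈ S, s⁻¹ ∈ S) {D c C α b p : ℝ}
    (hgrowth : HasVolumeGrowth S D c C) (hα : 0 ≤ α) {R : G → G → ℝ}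
    (hR_nonneg : ∀ x y, 0 ≤ R x y)
    (hR_le : ∀ x y, R x y ≤ b * ((wordDist S x y : ℝ) + 1) ^ (-(D - α)))
    (hp₁ : 1 ≤ p) (hp₂ : p < (D - α) / 2) :
    ∃ A : ℝ, 0 < A ∧ ∀ u : G → ℝ, Tendsto u cofinite (𝓝 0) → Summable (gradP S p u) →
      Summable (fun z : G × G ↦ R z.1 z.2 * |u z.2| ^ p * |u z.1| ^ p) ∧
        energy R p u ≤ A * (∑' x, gradP S p u x) ^ 2 := by
  have hD : 0 < D := by linarith
  have hp₀ : 0 < p := by linarith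
  obtain ⟨t, ht, ht₁, hkernel, hsub⟩ := exists_interpolation_exponent hα hp₀ hp₂
  have ht₀ : 0 < t := by linarith
  obtain ⟨B, hB, hHLS⟩ := exists_summable_and_tsum_kernel_le hS_gen hS_sym hgrowth hD.le
    hR_nonneg hR_le ht ht₁ hkernel
  obtain ⟨A, hA, hSobolev⟩ := exists_subcritical_sobolev_const hS_sym hgrowth hD hp₁
    (le_div_self hp₀.le ht₀ ht₁.le) hsub
  refine ⟨B * A ^ (2 * t) + 1, by positivity, fun u hu₀ hu ↦ ?_⟩
  set E := ∑' x, gradP S p u x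
  have hE : 0 ≤ E := tsum_gradP_nonneg
  obtain ⟨hsum, hle⟩ := hSobolev u hu₀ hu
  obtain ⟨hpairs, henergy⟩ := hHLS _ (fun x ↦ by positivity) hsum
  simp only [← Real.rpow_mul (abs_nonneg _), div_mul_cancel₀ p ht₀.ne'] at hpairs henergy
  refine ⟨hpairs, ?_⟩
  have : 0 ≤ ∑' x, |u x| ^ (p / t) := tsum_nonneg fun x ↦ by positivity
  calc energy R p u = ∑' z : G × G, R z.1 z.2 * |u z.2| ^ p * |u z.1| ^ p :=
        energy_eq_tsum_prod hpairs
    _ ≤ B * (∑' x, |u x| ^ (p / t)) ^ (2 * t) := henergy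
    _ ≤ B * (A * E ^ (p / t / p)) ^ (2 * t) := by gcongr
    _ = B * A ^ (2 * t) * E ^ 2 := by
        rw [Real.mul_rpow hA.le (by positivity), ← Real.rpow_mul hE, ← Real.rpow_natCast,
          mul_assoc]
        congr 3
        push_cast
        field_simp
    _ ≤ (B * A ^ (2 * t) + 1) * E ^ 2 := by
        gcongr
        linarith

theorem sobolev_type_inequality_pLaplace
    [Group G] [Countable G]
    (S : Finset G) (hS_gen : Subgroup.closure (S : Set G) = ⊤)
    (hS_sym : ∀ s ∈ S, s⁻¹ ∈ S) (hS_e : (1 : G) ∉ S)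
    (N : ℕ) (hN : 3 ≤ N)
    (C₁ C₂ : ℝ) (hC₁ : 0 < C₁) (hC₂ : 0 < C₂)
    (hgrowth : ∀ n : ℕ, 1 ≤ n →
      C₁ * (n : ℝ) ^ N ≤ (Nat.card {x : G // wordDist S 1 x ≤ n} : ℝ) ∧
      (Nat.card {x : G // wordDist S 1 x ≤ n} : ℝ) ≤ C₂ * (n : ℝ) ^ N)
    (α : ℝ) (hα : 0 < α) (hαN : α < (N : ℝ) - 2)
    (Rα : G → G → ℝ) (hR_nonneg : ∀ x y, 0 ≤ Rα x y)
    (hR_symm : ∀ x y, Rα x y = Rα y x)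
    (c₁ c₂ : ℝ) (hc₁ : 0 < c₁) (hc₂ : 0 < c₂)
    (hR_low : ∀ x y : G, x ≠ y → c₁ * (wordDist S x y : ℝ) ^ (α - (N : ℝ)) ≤ Rα x y)
    (hR_up : ∀ x y : G, x ≠ y → Rα x y ≤ c₂ * (wordDist S x y : ℝ) ^ (α - (N : ℝ)))
    (hR_diag : ∀ x : G, Rα x x ≤ c₂)
    (p : ℝ) (hp1 : 1 ≤ p) (hp2 : p < ((N : ℝ) - α) / 2) :
    ∃ C : ℝ, 0 < C ∧ ∀ u : G → ℝ, MemD1p S N p u →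
      (∑' x, conv Rα (fun y => |u y| ^ p) x * |u x| ^ p) ≤
        C * (∑' x, gradP S p u x) ^ 2 := by
  have hgrowth' : HasVolumeGrowth S N _ _ := .of_one_le N.cast_nonneg hC₁ fun n hn ↦ by
    simpa only [natCard_wordDist_le hS_gen hS_sym, Real.rpow_natCast] using hgrowth n hn
  have hR_le := kernel_le_wordDist_add_one_rpow hS_gen hS_sym hc₂.le (β := N - α) (by linarith)
    (by simpa only [neg_sub] using hR_up) hR_diag
  obtain ⟨C, hC, h⟩ := sobolev_type_inequality_pLaplace_general hS_gen hS_sym hgrowth' hα.le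
    hR_nonneg hR_le hp1 hp2
  refine ⟨C, hC, fun u hu ↦ (h u ?_ hu.2).2⟩
  exact Memlp.tendsto_cofinite_zero (div_pos (by nlinarith) (by linarith)) hu.1

end Choquard
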